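/- arXiv:2504.01479 — 2 statements merged into one kernel-verified Lean document; each statement's English description precedes it below -/
import Mathlib

section
/- For every N ≥ 2 and every 1 ≤ i ≤ N−1, the determinants of the trailing submatrices satisfy the three-term recursion det M_{i:N,c} = (λ_i + λ_{i+1} e^{2n(ξ_{i+1}−ξ_i)}) · det M_{i+1:N,c} − (λ_{i+1}^2 − 1/4) e^{2n(ξ_{i+1}−ξ_i)} · det M_{i+2:N,c}, with the convention det M_{N+1:N,c} = 1. -/
/-!
Write `r = e^{-nξ_i} / e^{-nξ_{i+1}}`. Beyond the leading `2 × 2` block, row `i` of `M_{i:N,c}` is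
`r` times row `i+1`, and column `i` is `r` times column `i+1`. Subtracting `r` times the second row
(column) from the first leaves a matrix whose first row and column vanish beyond the leading block,
so two Laplace expansions give a three-term formula for the determinant
(`det_of_proportional`). The identities `cosh x = (e^x + e^{-x}) / 2` and
`sinh x = (e^x - e^{-x}) / 2` then reduce its coefficients to `λ_i + r² λ_{i+1}` and
`-r (λ_{i+1} + 1/2) · r (1/2 - λ_{i+1})`.
-/

open Finset

/-- The trailing submatrix `M_{i:N,c}` (with arbitrary complex parameters
`λ_1, …, λ_N` given by `lam`), with rows and columns indexed by
`p, q ∈ {i, …, N}` (realized as `p = i + a` for `a : Fin (N+1−i)`):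
the `(p,p)` entry is `λ_p − (1/2) e^{−2nξ_p}`, the `(p,q)` entry for
`p < q` is `−cosh(nξ_q) e^{−nξ_p}`, and for `p > q` it is `sinh(nξ_p) e^{−nξ_q}`.
For `i = N+1` this is the empty matrix, whose determinant is `1`. -/
noncomputable def McSub (n N : ℕ) (ξ : ℕ → ℝ) (lam : ℕ → ℂ) (i : ℕ) :
    Matrix (Fin (N + 1 - i)) (Fin (N + 1 - i)) ℂ :=
  fun a b =>
    if a = b then
      lam (i + (a : ℕ)) - ((Real.exp (-(2 * n * ξ (i + (a : ℕ)))) / 2 : ℝ) : ℂ)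
    else if a < b then
      -(((Real.cosh (n * ξ (i + (b : ℕ))) * Real.exp (-(n * ξ (i + (a : ℕ))))) : ℝ) : ℂ)
    else
      (((Real.sinh (n * ξ (i + (a : ℕ))) * Real.exp (-(n * ξ (i + (b : ℕ))))) : ℝ) : ℂ)

/-- Laplace expansion of a matrix whose first row and column are supported on the first two
indices. -/
lemma det_of_first_sparse {m : ℕ} (A : Matrix (Fin (m + 2)) (Fin (m + 2)) ℂ)
    (hrow : ∀ j : Fin m, A 0 j.succ.succ = 0) (hcol : ∀ j : Fin m, A j.succ.succ 0 = 0) :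
    A.det = A 0 0 * (A.submatrix Fin.succ Fin.succ).det -
      A 0 1 * A 1 0 *
        (A.submatrix (fun a : Fin m => a.succ.succ) (fun a : Fin m => a.succ.succ)).det := by
  rw [Matrix.det_succ_row_zero, Fin.sum_univ_succ, Fin.sum_univ_succ]
  have h1 : (A.submatrix Fin.succ (Fin.succAbove (Fin.succ 0))).det =
      A 1 0 * (A.submatrix (fun a : Fin m => a.succ.succ) (fun a : Fin m => a.succ.succ)).det := by
    rw [Matrix.det_succ_column_zero, Fin.sum_univ_succ]
    simp [hcol, Matrix.submatrix_submatrix, Function.comp_def]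
  rw [h1]
  simp [hrow]
  ring

/-- If, beyond the leading `2 × 2` block, the first row and column are `r` times the second ones,
the determinant satisfies a three-term recursion in the trailing minors. -/
lemma det_of_proportional {m : ℕ} (A : Matrix (Fin (m + 2)) (Fin (m + 2)) ℂ) (r : ℂ)
    (hrow : ∀ j : Fin m, A 0 j.succ.succ = r * A 1 j.succ.succ)
    (hcol : ∀ j : Fin m, A j.succ.succ 0 = r * A j.succ.succ 1) :
    A.det = (A 0 0 - r * A 1 0 - r * A 0 1 + r ^ 2 * A 1 1) *
        (A.submatrix Fin.succ Fin.succ).det -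
      (A 0 1 - r * A 1 1) * (A 1 0 - r * A 1 1) *
        (A.submatrix (fun a : Fin m => a.succ.succ) (fun a : Fin m => a.succ.succ)).det := by
  have h01 : (0 : Fin (m + 2)) ≠ 1 := by simp
  set B := A.updateRow 0 (A 0 + (-r) • A 1) with hB
  set C := B.updateCol 0 (fun k => B k 0 + (-r) • B k 1) with hC
  have hdet : A.det = C.det := by
    rw [hC, Matrix.det_updateCol_add_smul_self B h01, hB, Matrix.det_updateRow_add_smul_self A h01]
  have e1 : C.submatrix Fin.succ Fin.succ = A.submatrix Fin.succ Fin.succ := by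
    ext a b
    simp [hC, hB, Matrix.updateRow_apply]
  have e2 : C.submatrix (fun a : Fin m => a.succ.succ) (fun a : Fin m => a.succ.succ) =
      A.submatrix (fun a : Fin m => a.succ.succ) (fun a : Fin m => a.succ.succ) := by
    ext a b
    simp [hC, hB, Matrix.updateRow_apply]
  rw [hdet, det_of_first_sparse C, e1, e2]
  · have c00 : C 0 0 = A 0 0 - r * A 1 0 - r * A 0 1 + r ^ 2 * A 1 1 := by
      simp [hC, hB, Matrix.updateRow_apply]
      ring
    have c01 : C 0 1 = A 0 1 - r * A 1 1 := by
      simp [hC, hB, Matrix.updateRow_apply]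
      ring
    have c10 : C 1 0 = A 1 0 - r * A 1 1 := by
      simp [hC, hB, Matrix.updateRow_apply]
      ring
    rw [c00, c01, c10]
  · intro j
    simp [hC, hB, Matrix.updateRow_apply, hrow]
  · intro j
    simp [hC, hB, Matrix.updateRow_apply, hcol]

/-- The matrix `M_{i:i+k-1,c}`, with its size `k` as a free parameter; this avoids the truncated
subtraction `N + 1 - i` in the index type of `McSub`. -/
noncomputable def McSize (n : ℕ) (ξ : ℕ → ℝ) (lam : ℕ → ℂ) (i k : ℕ) :
    Matrix (Fin k) (Fin k) ℂ :=
  fun a b =>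
    if a = b then
      lam (i + (a : ℕ)) - ((Real.exp (-(2 * n * ξ (i + (a : ℕ)))) / 2 : ℝ) : ℂ)
    else if a < b then
      -(((Real.cosh (n * ξ (i + (b : ℕ))) * Real.exp (-(n * ξ (i + (a : ℕ))))) : ℝ) : ℂ)
    else
      (((Real.sinh (n * ξ (i + (a : ℕ))) * Real.exp (-(n * ξ (i + (b : ℕ))))) : ℝ) : ℂ)

lemma det_McSub_eq (n N : ℕ) (ξ : ℕ → ℝ) (lam : ℕ → ℂ) (i k : ℕ) (h : N + 1 - i = k) :
    (McSub n N ξ lam i).det = (McSize n ξ lam i k).det := by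
  subst h
  rfl

lemma McSize_submatrix_succ (n : ℕ) (ξ : ℕ → ℝ) (lam : ℕ → ℂ) (i k : ℕ) :
    (McSize n ξ lam i (k + 1)).submatrix Fin.succ Fin.succ = McSize n ξ lam (i + 1) k := by
  ext a b
  simp only [Matrix.submatrix_apply, McSize, Fin.succ_inj, Fin.succ_lt_succ_iff, Fin.val_succ,
    add_assoc, add_comm 1]

/-- Three-term recursion for the determinants of the trailing submatrices
`M_{i:N,c}` (the convention `det M_{N+1:N,c} = 1` is automatic since the empty
matrix has determinant `1`). -/
theorem det_McSub_rec (n N : ℕ) (hn : 0 < n) (hN : 2 ≤ N) (ξ : ℕ → ℝ)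
    (hξ : ∀ i j, 1 ≤ i → i < j → j ≤ N → ξ j < ξ i) (hpos : 0 < ξ N)
    (lam : ℕ → ℂ) (i : ℕ) (hi1 : 1 ≤ i) (hiN : i ≤ N - 1) :
    (McSub n N ξ lam i).det =
      (lam i + lam (i + 1) * ((Real.exp (2 * n * (ξ (i + 1) - ξ i)) : ℝ) : ℂ)) *
          (McSub n N ξ lam (i + 1)).det -
        (lam (i + 1) ^ 2 - 1 / 4) * ((Real.exp (2 * n * (ξ (i + 1) - ξ i)) : ℝ) : ℂ) *
          (McSub n N ξ lam (i + 2)).det := by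
  obtain ⟨m, rfl⟩ : ∃ m, N = m + i + 1 := ⟨N - i - 1, by omega⟩
  rw [det_McSub_eq n _ ξ lam i (m + 2) (by omega),
    det_McSub_eq n _ ξ lam (i + 1) (m + 1) (by omega),
    det_McSub_eq n _ ξ lam (i + 2) m (by omega)]
  set u : ℝ := n * ξ i with hu
  set v : ℝ := n * ξ (i + 1) with hv
  have hr : Real.exp (2 * n * (ξ (i + 1) - ξ i)) = Real.exp (v - u) ^ 2 := by
    rw [← Real.exp_nat_mul]
    congr 1
    push_cast
    ring
  have hxu : Real.exp (-u) = Real.exp (v - u) * Real.exp (-v) := by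
    rw [← Real.exp_add]
    congr 1
    ring
  have hvv : (Real.exp v : ℂ) * (Real.exp (-v) : ℝ) = 1 := by
    rw [← Complex.ofReal_mul, ← Real.exp_add]
    simp
  have hdbl (x : ℝ) : Real.exp (-(2 * n * x)) = Real.exp (-(n * x)) ^ 2 := by
    rw [← Real.exp_nat_mul]
    congr 1
    push_cast
    ring
  have key := det_of_proportional (McSize n ξ lam i (m + 2)) (Real.exp (v - u) : ℝ) ?_ ?_
  · rw [McSize_submatrix_succ] at key
    have e2 : (McSize n ξ lam i (m + 2)).submatrix (fun a : Fin m => a.succ.succ)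
        (fun a : Fin m => a.succ.succ) = McSize n ξ lam (i + 2) m := by
      rw [← McSize_submatrix_succ n ξ lam (i + 1) m, ← McSize_submatrix_succ n ξ lam i (m + 1)]
      rfl
    have a00 : McSize n ξ lam i (m + 2) 0 0 = lam i - (Real.exp (-u) : ℝ) ^ 2 / 2 := by
      simp only [McSize, hdbl]
      simp [hu]
    have a11 : McSize n ξ lam i (m + 2) 1 1 = lam (i + 1) - (Real.exp (-v) : ℝ) ^ 2 / 2 := by
      simp only [McSize, hdbl]
      simp [hv]
    have a01 : McSize n ξ lam i (m + 2) 0 1 =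
        -((((Real.exp v : ℝ) + (Real.exp (-v) : ℝ)) / 2 : ℂ) * (Real.exp (-u) : ℝ)) := by
      simp only [McSize]
      rw [if_neg (by simp), if_pos (by simp)]
      simp [Real.cosh_eq, hu, hv]
    have a10 : McSize n ξ lam i (m + 2) 1 0 =
        ((((Real.exp v : ℝ) - (Real.exp (-v) : ℝ)) / 2 : ℂ) * (Real.exp (-u) : ℝ)) := by
      simp only [McSize]
      rw [if_neg (by simp), if_neg (by simp)]
      simp [Real.sinh_eq, hu, hv]
    rw [key, e2, a00, a01, a10, a11, hr, hxu]
    generalize (McSize n ξ lam (i + 1) (m + 1)).det = D1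
    generalize (McSize n ξ lam (i + 2) m).det = D2
    simp only [Complex.ofReal_mul, Complex.ofReal_pow]
    generalize ((Real.exp (v - u) : ℝ) : ℂ) = r at *
    generalize ((Real.exp v : ℝ) : ℂ) = y at *
    generalize ((Real.exp (-v) : ℝ) : ℂ) = x at *
    have c1 : -((y + x) / 2 * (r * x)) - r * (lam (i + 1) - x ^ 2 / 2) =
        -r * (lam (i + 1) + 1 / 2) := by
      linear_combination (-r / 2) * hvv
    have c2 : (y - x) / 2 * (r * x) - r * (lam (i + 1) - x ^ 2 / 2) =
        r * (1 / 2 - lam (i + 1)) := by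
      linear_combination (r / 2) * hvv
    rw [c1, c2]
    ring
  · intro j
    simp only [McSize]
    rw [if_neg (by simp [Fin.ext_iff]), if_pos (by simp [Fin.lt_def]),
      if_neg (by simp [Fin.ext_iff]), if_pos (by simp [Fin.lt_def])]
    simp only [Fin.val_zero, Fin.val_one, add_zero, ← hu, ← hv, hxu]
    push_cast
    ring
  · intro j
    simp only [McSize]
    rw [if_neg (by simp [Fin.ext_iff]), if_neg (by simp [Fin.lt_def]),
      if_neg (by simp [Fin.ext_iff]), if_neg (by simp [Fin.lt_def])]
    simp only [Fin.val_zero, Fin.val_one, add_zero, ← hu, ← hv, hxu]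
    push_cast
    ring
end

section
/- For every N ≥ 2 and every 1 ≤ i ≤ N−1, the determinants of the trailing submatrices satisfy the three-term recursion det M_{i:N,s} = (λ_i + λ_{i+1} e^{2n(ξ_{i+1}−ξ_i)}) · det M_{i+1:N,s} − (λ_{i+1}^2 − 1/4) e^{2n(ξ_{i+1}−ξ_i)} · det M_{i+2:N,s}, with the convention det M_{N+1:N,s} = 1. -/
/-!
Write `x_p = e^{-n ξ_p}` and `r = x_i / x_{i+1}`. To the right of column `i+1`, row `i` of
`M_{i:N,s}` is `r` times row `i+1`, and below row `i+1`, column `i` is `r` times column `i+1`.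
Subtracting `r` times row `i+1` from row `i`, and then `r` times column `i+1` from column `i`, leaves
a matrix whose first row and first column vanish beyond their first two entries, so its determinant
expands into two terms (`det_eq_of_row_col`). The `cosh` and `sinh` terms cancel in the corner: the
`(i,i)` entry becomes `λ_i + r² λ_{i+1}`, and the two off-diagonal ones become
`-r (λ_{i+1} + 1/2)` and `-r (λ_{i+1} - 1/2)`.
-/

open Finset

/-- The trailing submatrix `M_{i:N,s}` (with arbitrary complex parameters
`λ_1, …, λ_N` given by `lam`), with rows and columns indexed by
`p, q ∈ {i, …, N}` (realized as `p = i + a` for `a : Fin (N+1−i)`):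
the `(p,p)` entry is `λ_p + (1/2) e^{−2nξ_p}`, the `(p,q)` entry for
`p < q` is `−sinh(nξ_q) e^{−nξ_p}`, and for `p > q` it is `cosh(nξ_p) e^{−nξ_q}`.
For `i = N+1` this is the empty matrix, whose determinant is `1`. -/
noncomputable def MsSub (n N : ℕ) (ξ : ℕ → ℝ) (lam : ℕ → ℂ) (i : ℕ) :
    Matrix (Fin (N + 1 - i)) (Fin (N + 1 - i)) ℂ :=
  fun a b =>
    if a = b then
      lam (i + (a : ℕ)) + ((Real.exp (-(2 * n * ξ (i + (a : ℕ)))) / 2 : ℝ) : ℂ)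
    else if a < b then
      -(((Real.sinh (n * ξ (i + (b : ℕ))) * Real.exp (-(n * ξ (i + (a : ℕ))))) : ℝ) : ℂ)
    else
      (((Real.cosh (n * ξ (i + (a : ℕ))) * Real.exp (-(n * ξ (i + (b : ℕ))))) : ℝ) : ℂ)

/-- Expansion of a determinant whose first row and first column vanish beyond the first two
entries. -/
lemma det_eq_of_border {m : ℕ} (B : Matrix (Fin (m + 2)) (Fin (m + 2)) ℂ)
    (hrow : ∀ j : Fin m, B 0 j.succ.succ = 0) (hcol : ∀ j : Fin m, B j.succ.succ 0 = 0) :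
    B.det = B 0 0 * (B.submatrix Fin.succ Fin.succ).det -
      B 0 1 * B 1 0 *
        (B.submatrix (fun a : Fin m => a.succ.succ) (fun a : Fin m => a.succ.succ)).det := by
  -- The minor multiplying `B 0 1` has first column `(B 1 0, 0, …, 0)`.
  have hminor : (B.submatrix Fin.succ (Fin.succAbove 1)).det =
      B 1 0 *
        (B.submatrix (fun a : Fin m => a.succ.succ) (fun a : Fin m => a.succ.succ)).det := by
    rw [Matrix.det_succ_column_zero, Fin.sum_univ_succ, Finset.sum_eq_zero]
    · simp only [Matrix.submatrix_submatrix, Matrix.submatrix_apply]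
      have hc : Fin.succAbove (1 : Fin (m + 2)) ∘ Fin.succ = fun a : Fin m => a.succ.succ := by
        funext a
        exact Fin.succAbove_of_lt_succ _ _ (by simp [Fin.lt_def])
      simp [hc]
      exact Or.inl rfl
    · intro j _
      simp [hcol]
  rw [Matrix.det_succ_row_zero, Fin.sum_univ_succ, Fin.sum_univ_succ, Finset.sum_eq_zero]
  · simp only [Fin.succ_zero_eq_one, hminor]
    simp
    ring
  · intro j _
    simp [hrow]

/-- Two-term expansion of a determinant in which the first row is `r` times the second row, and the
first column `r` times the second column, outside the top-left `2 × 2` block. -/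
lemma det_eq_of_row_col {m : ℕ} (A : Matrix (Fin (m + 2)) (Fin (m + 2)) ℂ) (r : ℂ)
    (hrow : ∀ j : Fin m, A 0 j.succ.succ = r * A 1 j.succ.succ)
    (hcol : ∀ j : Fin m, A j.succ.succ 0 = r * A j.succ.succ 1) :
    A.det = (A 0 0 - r * A 1 0 - r * (A 0 1 - r * A 1 1)) *
        (A.submatrix Fin.succ Fin.succ).det -
      (A 0 1 - r * A 1 1) * (A 1 0 - r * A 1 1) *
        (A.submatrix (fun a : Fin m => a.succ.succ) (fun a : Fin m => a.succ.succ)).det := by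
  have h01 : (0 : Fin (m + 2)) ≠ 1 := by simp
  set A' := A.updateRow 0 (A 0 + (-r) • A 1) with hA'
  set B := A'.updateCol 0 (fun k => A' k 0 + (-r) • A' k 1) with hB
  have hdet : B.det = A.det := by
    rw [hB, Matrix.det_updateCol_add_smul_self _ h01, hA',
      Matrix.det_updateRow_add_smul_self _ h01]
  have hs : B.submatrix Fin.succ Fin.succ = A.submatrix Fin.succ Fin.succ := by
    ext a b
    simp [hB, hA', Matrix.updateRow_apply]
  have hss : B.submatrix (fun a : Fin m => a.succ.succ) (fun a : Fin m => a.succ.succ) =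
      A.submatrix (fun a : Fin m => a.succ.succ) (fun a : Fin m => a.succ.succ) := by
    ext a b
    simp [hB, hA', Matrix.updateRow_apply]
  rw [← hdet, det_eq_of_border B, hs, hss]
  · simp [hB, hA', Matrix.updateRow_apply]
    ring
  · intro j
    simp [hB, hA', Matrix.updateRow_apply, hrow]
  · intro j
    simp [hB, hA', Matrix.updateRow_apply, hcol]

/-- The `(p, q)` entry of the full matrix, with `p` and `q` arbitrary natural numbers. -/
noncomputable def msEntry (n : ℕ) (ξ : ℕ → ℝ) (lam : ℕ → ℂ) (p q : ℕ) : ℂ :=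
  if p = q then
    lam p + ((Real.exp (-(2 * n * ξ p)) / 2 : ℝ) : ℂ)
  else if p < q then
    -(((Real.sinh (n * ξ q) * Real.exp (-(n * ξ p))) : ℝ) : ℂ)
  else
    (((Real.cosh (n * ξ p) * Real.exp (-(n * ξ q))) : ℝ) : ℂ)

/-- Replaces the index type `Fin (N + 1 - i)` by `Fin k`, so that the size of the matrix can be
written without subtraction. -/
lemma det_MsSub_eq (n N : ℕ) (ξ : ℕ → ℝ) (lam : ℕ → ℂ) (i k : ℕ) (h : N + 1 - i = k) :
    (MsSub n N ξ lam i).det =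
      (Matrix.of fun a b : Fin k => msEntry n ξ lam (i + a) (i + b)).det := by
  subst h
  congr 1
  ext a b
  simp [MsSub, msEntry, Fin.ext_iff]

/-- Three-term recursion for the determinants of the trailing submatrices
`M_{i:N,s}` (the convention `det M_{N+1:N,s} = 1` is automatic since the empty
matrix has determinant `1`). -/
theorem det_MsSub_rec (n N : ℕ) (hn : 0 < n) (hN : 2 ≤ N) (ξ : ℕ → ℝ)
    (hξ : ∀ i j, 1 ≤ i → i < j → j ≤ N → ξ j < ξ i) (hpos : 0 < ξ N)
    (lam : ℕ → ℂ) (i : ℕ) (hi1 : 1 ≤ i) (hiN : i ≤ N - 1) :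
    (MsSub n N ξ lam i).det =
      (lam i + lam (i + 1) * ((Real.exp (2 * n * (ξ (i + 1) - ξ i)) : ℝ) : ℂ)) *
          (MsSub n N ξ lam (i + 1)).det -
        (lam (i + 1) ^ 2 - 1 / 4) * ((Real.exp (2 * n * (ξ (i + 1) - ξ i)) : ℝ) : ℂ) *
          (MsSub n N ξ lam (i + 2)).det := by
  obtain ⟨m, hm⟩ : ∃ m, N + 1 - i = m + 2 := ⟨N - 1 - i, by omega⟩
  rw [det_MsSub_eq n N ξ lam i (m + 2) hm, det_MsSub_eq n N ξ lam (i + 1) (m + 1) (by omega),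
    det_MsSub_eq n N ξ lam (i + 2) m (by omega)]
  set r : ℝ := Real.exp (n * (ξ (i + 1) - ξ i)) with hr
  have hr2 : Real.exp (2 * n * (ξ (i + 1) - ξ i)) = r ^ 2 := by
    rw [hr, ← Real.exp_nat_mul]
    congr 1
    push_cast
    ring
  have hxi : Real.exp (-(n * ξ i)) = r * Real.exp (-(n * ξ (i + 1))) := by
    rw [hr, ← Real.exp_add]
    congr 1
    ring
  have hsq : ∀ p, Real.exp (-(2 * n * ξ p)) = Real.exp (-(n * ξ p)) ^ 2 := by
    intro p
    rw [← Real.exp_nat_mul]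
    congr 1
    push_cast
    ring
  -- With `x = e^{-nξ_{i+1}}`, this gives `x cosh = (1 + x²) / 2` and `x sinh = (1 - x²) / 2`.
  have hinv : Real.exp (n * ξ (i + 1)) * Real.exp (-(n * ξ (i + 1))) = 1 := by
    rw [← Real.exp_add]
    simp
  rw [det_eq_of_row_col _ (r : ℂ), hr2]
  · have e1 : (Matrix.of fun a b : Fin (m + 2) =>
        msEntry n ξ lam (i + a) (i + b)).submatrix Fin.succ Fin.succ =
        Matrix.of fun a b : Fin (m + 1) => msEntry n ξ lam (i + 1 + a) (i + 1 + b) := by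
      ext a b
      simp [add_assoc, add_comm 1]
    have e2 : (Matrix.of fun a b : Fin (m + 2) =>
        msEntry n ξ lam (i + a) (i + b)).submatrix
          (fun a : Fin m => a.succ.succ) (fun a : Fin m => a.succ.succ) =
        Matrix.of fun a b : Fin m => msEntry n ξ lam (i + 2 + a) (i + 2 + b) := by
      ext a b
      simp [add_assoc, add_comm 2]
    have c00 : msEntry n ξ lam i i =
        lam i + (r * Real.exp (-(n * ξ (i + 1))) : ℂ) ^ 2 / 2 := by
      simp only [msEntry, if_true, hsq, hxi]
      push_cast
      rfl
    have c11 : msEntry n ξ lam (i + 1) (i + 1) =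
        lam (i + 1) + (Real.exp (-(n * ξ (i + 1))) : ℂ) ^ 2 / 2 := by
      simp only [msEntry, if_true, hsq]
      push_cast
      rfl
    have c01 : msEntry n ξ lam i (i + 1) =
        -(r * (1 - (Real.exp (-(n * ξ (i + 1))) : ℂ) ^ 2) / 2) := by
      rw [msEntry, if_neg (by omega), if_pos (by omega), hxi, Real.sinh_eq, ← Complex.ofReal_neg]
      norm_cast
      linear_combination (-r / 2) * hinv
    have c10 : msEntry n ξ lam (i + 1) i =
        r * (1 + (Real.exp (-(n * ξ (i + 1))) : ℂ) ^ 2) / 2 := by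
      rw [msEntry, if_neg (by omega), if_neg (by omega), hxi, Real.cosh_eq]
      norm_cast
      linear_combination (r / 2) * hinv
    rw [e1, e2]
    simp only [Matrix.of_apply, Fin.val_zero, Fin.val_one, add_zero, c00, c01, c10, c11]
    push_cast
    ring
  · intro j
    simp only [Matrix.of_apply, Fin.val_zero, Fin.val_one, Fin.val_succ, add_zero]
    rw [msEntry, if_neg (by omega), if_pos (by omega), msEntry, if_neg (by omega),
      if_pos (by omega), hxi]
    push_cast
    ring
  · intro j
    simp only [Matrix.of_apply, Fin.val_zero, Fin.val_one, Fin.val_succ, add_zero]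
    rw [msEntry, if_neg (by omega), if_neg (by omega), msEntry, if_neg (by omega),
      if_neg (by omega), hxi]
    push_cast
    ring
end
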